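/- Let n ≥ 1 be a natural number, ω = e^{2πi/n}, and let P(z) be a non-zero complex polynomial with deg P ≤ n−1 having exactly k distinct roots among the n-th roots of unity. If w(P) · (n − k) = n, then there exist a non-zero complex number c, a divisor r of n, an integer l with 0 ≤ l ≤ r−1, and an integer j with 0 ≤ j ≤ n−1, such that P(z) = c · D_{n,r,l}(ω^j z). -/

import Mathlib

open Polynomial

/-- The polynomial `D_{n,r,l}(z) = z^l (1 + z^r + z^{2r} + ⋯ + z^{(n/r - 1) r})`. -/
noncomputable def Dpoly (n r l : ℕ) : Polynomial ℂ :=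
  Polynomial.X ^ l * ∑ i ∈ Finset.range (n / r), Polynomial.X ^ (i * r)

/-!
Put `s = w(P)` and let `r = n - k` be the number of `n`-th roots of unity at which `P` does not
vanish, so that `s r = n`. By a Vandermonde determinant, `P` cannot vanish at `s` consecutive
powers of `ω`. The `n` powers split into `r` blocks of length `s`, and wherever the first block
starts, each block contains exactly one non-root. Hence consecutive non-roots are exactly `s`
steps apart and, after a rotation `z ↦ z₀ z`, they are precisely the `r`-th roots of unity. So
`P` is divisible by `(z^n - 1) / (z^r - 1) = 1 + z^r + ⋯ + z^{(s-1)r}`, with a quotient `F` of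
degree less than `r`. The `s` shifted copies of `F` do not overlap, so `s = w(P) = s w(F)`, and
`F` is a monomial.
-/

open Finset

section Windows

variable {p : ℕ → Prop} [DecidablePred p] {s r : ℕ}

lemma injOn_div_of_forall_window (hwindow : ∀ b, ∃ i < s, p (b + i))
    (hcard : #{m ∈ range (s * r) | p m} ≤ r) :
    Set.InjOn (· / s) (({m ∈ range (s * r) | p m} : Finset ℕ) : Set ℕ) := by
  refine injOn_of_surjOn_of_card_le (t := range r) _ (fun m hm ↦ ?_) (fun q hq ↦ ?_)
    (by rwa [card_range])
  · exact mem_range.mpr (Nat.div_lt_of_lt_mul (mem_range.mp (mem_filter.mp hm).1))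
  · obtain ⟨i, hi, hp⟩ := hwindow (s * q)
    have hqr : s * (q + 1) ≤ s * r := Nat.mul_le_mul_left s (mem_range.mp hq)
    refine ⟨s * q + i, mem_filter.mpr ⟨mem_range.mpr (by linarith), hp⟩, ?_⟩
    simp [Nat.mul_add_div (Nat.zero_lt_of_lt hi), Nat.div_eq_of_lt hi]

lemma iff_dvd_of_forall_window (hwindow : ∀ b, ∃ i < s, p (b + i))
    (hcard : #{m ∈ range (s * r) | p m} ≤ r) (h0 : p 0) {m : ℕ} (hm : m < s * r) :
    p m ↔ s ∣ m := by
  have hs : 0 < s := Nat.pos_of_mul_pos_right (Nat.zero_lt_of_lt hm)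
  have eq_of_same_block {a b : ℕ} (ha : a < s * r) (hb : b < s * r) (hpa : p a) (hpb : p b)
      (hab : a / s = b / s) : a = b :=
    injOn_div_of_forall_window hwindow hcard (mem_filter.mpr ⟨mem_range.mpr ha, hpa⟩)
      (mem_filter.mpr ⟨mem_range.mpr hb, hpb⟩) hab
  have multiples (q : ℕ) (hq : q < r) : p (s * q) := by
    induction q with
    | zero => simpa using h0
    | succ q ih =>
      have hpq := ih (by omega)
      have hqr : s * (q + 1) < s * r := Nat.mul_lt_mul_of_pos_left hq hs
      -- The window starting just after `s * q` can only be hit at its last point.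
      obtain ⟨i, hi, hp⟩ := hwindow (s * q + 1)
      obtain hlt | hlast := (Nat.succ_le_of_lt hi).lt_or_eq
      · have := eq_of_same_block (by linarith) (by linarith) hp hpq (by
          rw [add_assoc, Nat.mul_add_div hs, Nat.div_eq_of_lt (by omega),
            Nat.mul_div_cancel_left _ hs, add_zero])
        omega
      · have hend : s * q + 1 + i = s * (q + 1) := by linarith
        rwa [hend] at hp
  refine ⟨fun hp ↦ ⟨m / s, ?_⟩, ?_⟩
  · have hq : m / s < r := Nat.div_lt_of_lt_mul hm
    exact eq_of_same_block hm (Nat.mul_lt_mul_of_pos_left hq hs) hp (multiples _ hq)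
      (Nat.mul_div_cancel_left _ hs).symm
  · rintro ⟨q, rfl⟩
    exact multiples q (Nat.lt_of_mul_lt_mul_left hm)

end Windows

section Semiring

variable {R : Type*} [Semiring R]

/-- The polynomial `1 + X ^ r + ⋯ + X ^ ((s - 1) * r)`, that is `(X ^ (s * r) - 1) / (X ^ r - 1)`;
multiplication by it concatenates `s` copies of a coefficient block of length `r`. -/
noncomputable def blockSum (R : Type*) [Semiring R] (r s : ℕ) : R[X] :=
  ∑ i ∈ range s, X ^ (i * r)

lemma coeff_blockSum_mul {F : R[X]} {r s i l : ℕ} (hF : F.natDegree < r) (hi : i < s) (hl : l < r) :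
    (blockSum R r s * F).coeff (i * r + l) = F.coeff l := by
  simp only [blockSum, sum_mul, finsetSum_coeff, coeff_X_pow_mul']
  rw [sum_eq_single_of_mem i (mem_range.mpr hi)]
  · simp
  · intro j _ hji
    split_ifs with hj
    · have hlt : j < i := by
        refine lt_of_le_of_ne (Nat.lt_succ_iff.mp (Nat.lt_of_mul_lt_mul_right (a := r) ?_)) hji
        linarith
      have hle : (j + 1) * r ≤ i * r := Nat.mul_le_mul_right r hlt
      refine coeff_eq_zero_of_natDegree_lt (hF.trans_le (Nat.le_sub_of_add_le ?_))
      linarith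
    · rfl

lemma mul_card_support_le_card_support_blockSum_mul {F : R[X]} {r : ℕ} (s : ℕ)
    (hF : F.natDegree < r) : s * #F.support ≤ #(blockSum R r s * F).support := by
  have lt_of_mem {l : ℕ} (hl : l ∈ F.support) : l < r := (le_natDegree_of_mem_supp l hl).trans_lt hF
  rw [← card_range s, ← card_product, card_range]
  refine card_le_card_of_injOn (fun x ↦ x.1 * r + x.2) (fun x hx ↦ ?_) fun x hx y hy hxy ↦ ?_
  · obtain ⟨hi, hl⟩ := mem_product.mp hx
    rw [mem_coe, mem_support_iff, coeff_blockSum_mul hF (mem_range.mp hi) (lt_of_mem hl)]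
    exact mem_support_iff.mp hl
  · have hx2 := lt_of_mem (mem_product.mp hx).2
    have hy2 := lt_of_mem (mem_product.mp hy).2
    have hmod : x.2 = y.2 := by
      simpa [Nat.mul_add_mod', Nat.mod_eq_of_lt, hx2, hy2] using congrArg (· % r) hxy
    have hdiv : x.1 * r = y.1 * r := by simpa [hmod] using hxy
    exact Prod.ext (Nat.eq_of_mul_eq_mul_right (by omega) hdiv) hmod

lemma support_comp_C_mul_X [NoZeroDivisors R] (P : R[X]) {a : R} (ha : a ≠ 0) :
    (P.comp (C a * X)).support = P.support := by
  have : Nontrivial R := nontrivial_of_ne a 0 ha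
  ext m
  simp [ha]

end Semiring

section IsDomain

variable {R : Type*} [CommRing R] [IsDomain R]

lemma exists_eval_mul_pow_ne_zero {P : R[X]} (hP : P ≠ 0) {x y : R} (hy : y ≠ 0)
    (hx : Set.InjOn (x ^ ·) (P.support : Set ℕ)) :
    ∃ i < #P.support, P.eval (y * x ^ i) ≠ 0 := by
  by_contra! hzero
  let e := P.support.equivFin.symm
  have hf : Function.Injective fun j ↦ x ^ (e j : ℕ) := fun i j hij ↦
    e.injective (Subtype.ext (hx (e i).2 (e j).2 hij))
  have hvanish : (fun j ↦ P.coeff (e j) * y ^ (e j : ℕ)) = 0 := by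
    refine Matrix.eq_zero_of_forall_pow_sum_mul_pow_eq_zero hf fun i ↦ ?_
    calc ∑ j, P.coeff (e j) * y ^ (e j : ℕ) * (x ^ (e j : ℕ)) ^ (i : ℕ)
        = ∑ m : P.support, P.coeff m * y ^ (m : ℕ) * (x ^ (m : ℕ)) ^ (i : ℕ) :=
          e.sum_comp fun m : P.support ↦ P.coeff m * y ^ (m : ℕ) * (x ^ (m : ℕ)) ^ (i : ℕ)
      _ = ∑ m ∈ P.support, P.coeff m * (y * x ^ (i : ℕ)) ^ m := by
          rw [← sum_coe_sort P.support]
          exact sum_congr rfl fun m _ ↦ by ring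
      _ = 0 := eval_eq_sum.symm.trans (hzero i i.2)
  obtain ⟨m, hm⟩ := support_nonempty.mpr hP
  have hterm := congrFun hvanish (e.symm ⟨m, hm⟩)
  simp only [Equiv.apply_symm_apply, Pi.zero_apply] at hterm
  exact mul_ne_zero (mem_support_iff.mp hm) (pow_ne_zero m hy) hterm

lemma X_pow_sub_one_dvd_of_forall_eval_eq_zero {n : ℕ} {ω : R} (hn : 0 < n)
    (hω : IsPrimitiveRoot ω n) {P : R[X]} (hP : ∀ z, z ^ n = 1 → P.eval z = 0) :
    X ^ n - 1 ∣ P := by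
  obtain rfl | hP0 := eq_or_ne P 0
  · exact dvd_zero _
  rw [X_pow_sub_one_eq_prod hn hω]
  refine (Multiset.prod_X_sub_C_dvd_iff_le_roots hP0 _).mpr
    ((Multiset.le_iff_subset (nthRootsFinset n 1).nodup).mpr fun z hz ↦ ?_)
  exact (mem_roots hP0).mpr (hP z ((mem_nthRootsFinset hn 1).mp hz))

lemma exists_eq_blockSum_mul {r s : ℕ} {ω : R} (hω : IsPrimitiveRoot ω (s * r)) {P : R[X]}
    (hdeg : P.natDegree < s * r) (hP : ∀ z, z ^ (s * r) = 1 → z ^ r ≠ 1 → P.eval z = 0) :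
    ∃ F : R[X], F.natDegree < r ∧ P = blockSum R r s * F := by
  have hsr : 0 < s * r := Nat.zero_lt_of_lt hdeg
  have hr : 0 < r := Nat.pos_of_mul_pos_left hsr
  have geom : (X ^ r - 1) * blockSum R r s = X ^ (s * r) - 1 := by
    simp only [blockSum, mul_comm _ r, pow_mul, mul_geom_sum]
  have ne_zero {d : ℕ} (hd : 0 < d) : (X ^ d - 1 : R[X]) ≠ 0 := X_pow_sub_C_ne_zero hd 1
  have natDegree_eq (d : ℕ) : (X ^ d - 1 : R[X]).natDegree = d := natDegree_X_pow_sub_C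
  obtain ⟨F, hF⟩ : X ^ (s * r) - 1 ∣ (X ^ r - 1) * P := by
    refine X_pow_sub_one_dvd_of_forall_eval_eq_zero hsr hω fun z hz ↦ ?_
    by_cases hzr : z ^ r = 1
    · simp [hzr]
    · simp [hP z hz hzr]
  have hPF : P = blockSum R r s * F := by
    rw [← geom, mul_assoc] at hF
    exact mul_left_cancel₀ (ne_zero hr) hF
  refine ⟨F, ?_, hPF⟩
  obtain rfl | hF0 := eq_or_ne F 0
  · simpa using hr
  have hP0 : P ≠ 0 := right_ne_zero_of_mul (hF ▸ mul_ne_zero (ne_zero hsr) hF0)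
  have hdegrees := congrArg natDegree hF
  rw [natDegree_mul (ne_zero hr) hP0, natDegree_mul (ne_zero hsr) hF0, natDegree_eq,
    natDegree_eq] at hdegrees
  omega

lemma exists_pow_mul_eq_one {n : ℕ} (hn : 0 < n) {ω z : R} (hω : IsPrimitiveRoot ω n)
    (hz : z ^ n = 1) : ∃ j < n, ω ^ j * z = 1 := by
  have : NeZero n := ⟨hn.ne'⟩
  obtain ⟨j, hj, hωj⟩ := hω.eq_pow_of_pow_eq_one (ξ := z ^ (n - 1))
    (by rw [← pow_mul, mul_comm, pow_mul, hz, one_pow])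
  exact ⟨j, hj, by rw [hωj, pow_sub_one_mul hn.ne', hz]⟩

variable [DecidableEq R]

lemma exists_eq_C_mul_X_pow_mul_blockSum_of_eval_one {n r : ℕ} {ω : R}
    (hω : IsPrimitiveRoot ω n) {P : R[X]} (hdeg : P.natDegree < n)
    (hr : #{m ∈ range n | P.eval (ω ^ m) ≠ 0} = r)
    (heq : #P.support * r = n) (h1 : P.eval 1 ≠ 0) :
    ∃ c l, c ≠ 0 ∧ l < r ∧ P = C c * (X ^ l * blockSum R r #P.support) := by
  set s := #P.support with hs
  subst heq
  have hP0 : P ≠ 0 := by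
    rintro rfl
    simp at h1
  have ω_ne_zero : ω ≠ 0 := hω.ne_zero (Nat.ne_zero_of_lt hdeg)
  have pow_injOn : Set.InjOn (ω ^ ·) (P.support : Set ℕ) := fun a ha b hb ↦
    hω.pow_inj ((le_natDegree_of_mem_supp a ha).trans_lt hdeg)
      ((le_natDegree_of_mem_supp b hb).trans_lt hdeg)
  have nonroot_iff {m : ℕ} (hm : m < s * r) : P.eval (ω ^ m) ≠ 0 ↔ s ∣ m := by
    refine iff_dvd_of_forall_window (fun b ↦ ?_) hr.le (by rwa [pow_zero]) hm
    simpa only [pow_add] using exists_eval_mul_pow_ne_zero hP0 (pow_ne_zero b ω_ne_zero) pow_injOn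
  obtain ⟨F, hF, hPF⟩ : ∃ F : R[X], F.natDegree < r ∧ P = blockSum R r s * F := by
    refine exists_eq_blockSum_mul hω hdeg fun z hz hzr ↦ ?_
    have : NeZero (s * r) := ⟨Nat.ne_zero_of_lt hdeg⟩
    obtain ⟨m, hm, rfl⟩ := hω.eq_pow_of_pow_eq_one hz
    by_contra hne
    obtain ⟨q, rfl⟩ := (nonroot_iff hm).mp hne
    refine hzr ?_
    rw [← pow_mul, mul_right_comm, pow_mul, hω.pow_eq_one, one_pow]
  have hF0 : F ≠ 0 := right_ne_zero_of_mul (hPF ▸ hP0)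
  have card_le_one : #F.support ≤ 1 := by
    have hle := mul_card_support_le_card_support_blockSum_mul s hF
    rw [← hPF, ← hs] at hle
    exact Nat.le_of_mul_le_mul_left (by simpa using hle) (card_pos.mpr (support_nonempty.mpr hP0))
  refine ⟨F.leadingCoeff, F.natDegree, leadingCoeff_ne_zero.mpr hF0, hF, ?_⟩
  rw [← mul_assoc, C_mul_X_pow_eq_self card_le_one, mul_comm, ← hPF]

lemma card_filter_nthRoots_one {n : ℕ} {ω z₀ : R} (hω : IsPrimitiveRoot ω n) (hz₀ : z₀ ^ n = 1)
    (p : R → Prop) [DecidablePred p] :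
    #{z ∈ (nthRoots n (1 : R)).toFinset | p z} = #{m ∈ range n | p (z₀ * ω ^ m)} := by
  rw [← Multiset.toFinset_filter, Multiset.toFinset_card_of_nodup (hω.nthRoots_one_nodup.filter p),
    hω.nthRoots_eq hz₀, Multiset.filter_map, Multiset.card_map]
  simp only [mul_comm _ z₀]
  rfl

lemma card_filter_eval_ne_zero_nthRoots_one {n : ℕ} {ω : R} (hω : IsPrimitiveRoot ω n) (P : R[X]) :
    #{z ∈ (nthRoots n (1 : R)).toFinset | P.eval z ≠ 0} =
      n - #{z ∈ (nthRoots n (1 : R)).toFinset | P.eval z = 0} := by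
  have hsplit := card_filter_add_card_filter_not (s := (nthRoots n (1 : R)).toFinset)
    (fun z ↦ P.eval z = 0)
  rw [Multiset.toFinset_card_of_nodup hω.nthRoots_one_nodup, hω.card_nthRoots_one] at hsplit
  exact Nat.eq_sub_of_add_eq' hsplit

theorem equality_case_general {n : ℕ} (hn : 1 ≤ n) {ω : R} (hω : IsPrimitiveRoot ω n) {P : R[X]}
    (hdeg : P.natDegree ≤ n - 1) {k : ℕ}
    (hk : k = #{z ∈ (nthRoots n (1 : R)).toFinset | P.eval z = 0})
    (heq : #P.support * (n - k) = n) :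
    ∃ (c : R) (r l j : ℕ), c ≠ 0 ∧ r ∣ n ∧ l < r ∧ j < n ∧
      P = C c * (X ^ l * ∑ i ∈ range (n / r), X ^ (i * r)).comp (C (ω ^ j) * X) := by
  have hcard := hk ▸ card_filter_eval_ne_zero_nthRoots_one hω P
  obtain ⟨z₀, hz₀⟩ : {z ∈ (nthRoots n (1 : R)).toFinset | P.eval z ≠ 0}.Nonempty := by
    rw [← card_pos, hcard]
    exact Nat.pos_of_mul_pos_left (heq ▸ hn)
  simp only [mem_filter, Multiset.mem_toFinset, mem_nthRoots hn] at hz₀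
  obtain ⟨hz₀n, hPz₀⟩ := hz₀
  obtain ⟨j, hj, hjz₀⟩ := exists_pow_mul_eq_one hn hω hz₀n
  have hsupp : (P.comp (C z₀ * X)).support = P.support :=
    support_comp_C_mul_X P (right_ne_zero_of_mul_eq_one hjz₀)
  have hdeg' : (P.comp (C z₀ * X)).natDegree < n := by
    rw [natDegree_comp, natDegree_C_mul_X z₀ (right_ne_zero_of_mul_eq_one hjz₀)]
    omega
  have hcard' : #{m ∈ range n | (P.comp (C z₀ * X)).eval (ω ^ m) ≠ 0} = n - k := by
    simpa using (card_filter_nthRoots_one hω hz₀n (P.eval · ≠ 0)).symm.trans hcard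
  obtain ⟨c, l, hc, hl, hQ⟩ := exists_eq_C_mul_X_pow_mul_blockSum_of_eval_one hω hdeg' hcard'
    (hsupp ▸ heq) (by simpa using hPz₀)
  have hsn : n / (n - k) = #P.support := Nat.div_eq_of_eq_mul_left (by omega) heq.symm
  refine ⟨c, n - k, l, j, hc, Dvd.intro_left _ heq, hl, hj, ?_⟩
  calc P = (P.comp (C z₀ * X)).comp (C (ω ^ j) * X) := by
        rw [comp_assoc, mul_comp, C_comp, X_comp, ← mul_assoc, ← C_mul, mul_comm z₀, hjz₀, C_1,
          one_mul, comp_X]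
    _ = _ := by rw [hQ, mul_comp, C_comp, hsupp, hsn, blockSum]

end IsDomain

/-- Let `n ≥ 1`, `ω = e^{2πi/n}`, and let `P` be a non-zero complex polynomial of
degree at most `n - 1` having exactly `k` distinct roots among the `n`-th roots of
unity. If `w(P) * (n - k) = n`, then `P(z) = c · D_{n,r,l}(ω^j z)` for some `c ≠ 0`,
a divisor `r` of `n`, some `0 ≤ l ≤ r - 1` and some `0 ≤ j ≤ n - 1`. -/
theorem equality_case (n : ℕ) (hn : 1 ≤ n)
    (ω : ℂ) (hω : ω = Complex.exp (2 * Real.pi * Complex.I / n))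
    (P : Polynomial ℂ) (hP : P ≠ 0) (hdeg : P.natDegree ≤ n - 1)
    (k : ℕ)
    (hk : k = (((Polynomial.nthRoots n (1 : ℂ)).toFinset).filter
      (fun z => P.eval z = 0)).card)
    (heq : P.support.card * (n - k) = n) :
    ∃ (c : ℂ) (r l j : ℕ), c ≠ 0 ∧ r ∣ n ∧ l < r ∧ j < n ∧
      P = Polynomial.C c *
        ((Dpoly n r l).comp (Polynomial.C (ω ^ j) * Polynomial.X)) := by
  have hprim : IsPrimitiveRoot ω n := hω ▸ Complex.isPrimitiveRoot_exp n (by omega)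
  exact equality_case_general hn hprim hdeg hk heq
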